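/- For every α ∈ (0,1) there is a nonzero real constant c, depending only on α, such that for every g ∈ C_c^∞(ℝ, ℂ) and every t ∈ ℝ the integral ∫_ℝ (W_α g)(x)·|t−x|^{α−1} dx converges absolutely and equals c·g(t). -/

import Mathlib

/-!
Write `k(u) = sgn(u) |u|^{-α}` (`oddKer`). Differentiating under the convolution (`Walpha_eq`) gives
`α W(x) = ∫ g'(y) k(y-x) dy`, and by translation it is enough to treat `t = 0`. The kernel
`K(x,y) = k(y-x) |x|^{α-1}` is homogeneous of degree `-1`, and at infinity in `x` it behaves like
`-1/x`, so Fubini does not apply directly. It splits as (`kernel_eq`)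

  `K(x,y) = y⁻¹ φ(x/y) - x⁻¹ 1_{|x|>|y|}`

with `φ` (`profile`) integrable on `ℝ`: near `0` and `1` it has integrable power singularities, and
`φ(z) = O(z⁻²)` at infinity. Let `g'` be supported in `[-R,R]`. Because `∫ g' = 0`, the part
`|x| > R` of the second term contributes nothing to `∫ g'(y) K(x,y) dy`. What remains,
`g'(y) y⁻¹ φ(x/y) - g'(y) x⁻¹ 1_{|y|<|x|≤R}`, is integrable on the plane
(`integrable_scaled_profile`, `integrable_annKer`); the second piece is controlled by
`|x|⁻¹ ≤ |x|^{-1/2} |y|^{-1/2}`. Fubini then gives absolute convergence in `x`. The second piece is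
odd in `x` and integrates to `0`; the first gives `∫ g'(y) sgn(y) dy ∫ φ = -2 g(0) ∫ φ` (`core`).

The constant is therefore `-(2/α) ∫ φ`. It is nonzero because `∫ φ > 0` (`integral_profile_pos`):
folding the integral by `z ↦ -z` and `z ↦ 1/z` produces an integrand whose positivity on `(0,1)`
amounts to `x^α + s^α + (xs)^α > 1` with `s = (1-x)/(1+x)`, which follows from `x + s + xs = 1`.
-/


open MeasureTheory

/-- (V_α g)(t) = (1/α)·∫ g(x)·sgn(x−t)·|x−t|^{−α} dx. -/
noncomputable def Valpha (α : ℝ) (g : ℝ → ℂ) (t : ℝ) : ℂ :=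
  (α⁻¹ : ℝ) • ∫ x : ℝ, g x * ((Real.sign (x - t) * |x - t| ^ (-α) : ℝ) : ℂ)

/-- (W_α g) = (V_α g)′. -/
noncomputable def Walpha (α : ℝ) (g : ℝ → ℂ) : ℝ → ℂ :=
  deriv (Valpha α g)

open Set

/-! ### The kernel and its profile function -/

/-- The odd kernel `sgn(u) |u|^{-α}` through which `Valpha` is defined. -/
noncomputable def oddKer (α u : ℝ) : ℝ := Real.sign u * |u| ^ (-α)

/-- The profile function: `y⁻¹ φ(x/y)` is the product kernel `k(y-x) |x|^{α-1}` (with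
`k = oddKer α`), plus the multiple `x⁻¹ 1_{|x|>|y|}` of the odd function `x⁻¹` that cancels its
non-integrable tail. -/
noncomputable def profile (α z : ℝ) : ℝ :=
  oddKer α (1 - z) * |z| ^ (α - 1) + (if 1 < |z| then z⁻¹ else 0)

lemma measurable_sign_real : Measurable Real.sign := by
  unfold Real.sign
  exact Measurable.ite measurableSet_Iio measurable_const
    (Measurable.ite measurableSet_Ioi measurable_const measurable_const)

lemma measurable_oddKer (α : ℝ) : Measurable (oddKer α) := by
  unfold oddKer
  exact measurable_sign_real.mul (by fun_prop)

lemma measurable_profile (α : ℝ) : Measurable (profile α) := by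
  unfold profile
  refine Measurable.add (((measurable_oddKer α).comp (by fun_prop)).mul (by fun_prop)) ?_
  exact Measurable.ite (measurableSet_lt measurable_const (by fun_prop)) (by fun_prop)
    measurable_const

lemma abs_sign_le (u : ℝ) : |Real.sign u| ≤ 1 := by
  rcases Real.sign_apply_eq u with h | h | h <;> simp [h]

lemma abs_oddKer_le (α u : ℝ) : |oddKer α u| ≤ |u| ^ (-α) := by
  unfold oddKer
  rw [abs_mul, abs_of_nonneg (Real.rpow_nonneg (abs_nonneg u) _)]
  exact mul_le_of_le_one_left (Real.rpow_nonneg (abs_nonneg u) _) (abs_sign_le u)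

lemma sign_mul_real (a b : ℝ) : Real.sign (a * b) = Real.sign a * Real.sign b := by
  rcases lt_trichotomy a 0 with ha | ha | ha <;> rcases lt_trichotomy b 0 with hb | hb | hb <;>
    simp [ha, hb, Real.sign_of_neg, Real.sign_of_pos, mul_pos_of_neg_of_neg,
      mul_neg_of_neg_of_pos, mul_neg_of_pos_of_neg]

lemma oddKer_neg (α u : ℝ) : oddKer α (-u) = -oddKer α u := by
  simp [oddKer, Real.sign_neg]

lemma integrable_cutoff_abs_rpow {a : ℝ} (ha : -1 < a) (R : ℝ) :
    Integrable (fun x : ℝ => if |x| ≤ R then |x| ^ a else 0) := by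
  have h := (integrable_fun_norm_addHaar (μ := (volume : Measure ℝ))
    (f := fun y : ℝ => if y ≤ R then y ^ a else 0)).2 ?_
  · simpa [Real.norm_eq_abs] using h
  · simp only [Module.finrank_self, Nat.sub_self, pow_zero, one_smul]
    have h1 : IntegrableOn (fun y : ℝ => y ^ a) (Ioc 0 R) := by
      rcases le_or_gt 0 R with hR | hR
      · exact (intervalIntegrable_iff_integrableOn_Ioc_of_le hR).1
          (intervalIntegral.intervalIntegrable_rpow' ha)
      · simp [Ioc_eq_empty (not_lt.2 hR.le)]
    rw [← integrable_indicator_iff measurableSet_Ioc] at h1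
    rw [← integrable_indicator_iff measurableSet_Ioi]
    refine h1.congr (Filter.Eventually.of_forall fun x => ?_)
    by_cases hx : 0 < x <;> by_cases hx' : x ≤ R <;> simp [indicator, hx, hx']

lemma locallyIntegrable_abs_rpow {a : ℝ} (ha : -1 < a) :
    LocallyIntegrable (fun x : ℝ => |x| ^ a) := by
  rw [locallyIntegrable_iff]
  intro K hK
  obtain ⟨R, hR⟩ := hK.isBounded.exists_norm_le
  rw [← integrable_indicator_iff hK.measurableSet]
  refine (integrable_cutoff_abs_rpow ha R).mono' ?_ (Filter.Eventually.of_forall fun x => ?_)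
  · exact (Measurable.indicator (by fun_prop) hK.measurableSet).aestronglyMeasurable
  · by_cases hx : x ∈ K
    · have := hR x hx
      rw [Real.norm_eq_abs] at this
      simp [hx, this, abs_of_nonneg (Real.rpow_nonneg (abs_nonneg x) a)]
    · simp only [hx, not_false_eq_true, indicator_of_notMem, norm_zero]
      split_ifs
      · exact Real.rpow_nonneg (abs_nonneg x) _
      · rfl

/-- For `|z| > 1` the profile is `z⁻¹ (1 - (1-1/z)^{-α})`, on both half-lines. -/
lemma profile_of_one_lt_abs {α z : ℝ} (hz : 1 < |z|) :
    profile α z = z⁻¹ * (1 - (1 - z⁻¹) ^ (-α)) := by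
  have hz0 : z ≠ 0 := by rintro rfl; simp at hz; linarith
  have hzp : 0 < |z| := abs_pos.2 hz0
  have hzi : |z⁻¹| < 1 := by rw [abs_inv]; exact inv_lt_one_of_one_lt₀ hz
  have h1 : 0 < 1 - z⁻¹ := by linarith [(abs_lt.1 hzi).2]
  have h2 : 1 - z = -z * (1 - z⁻¹) := by field_simp; ring
  have h3 : |1 - z| = |z| * (1 - z⁻¹) := by rw [h2, abs_mul, abs_neg, abs_of_pos h1]
  have h4 : Real.sign (1 - z) = -Real.sign z := by
    rw [h2, sign_mul_real, Real.sign_of_pos h1, Real.sign_neg, mul_one]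
  have h5 : Real.sign z * |z|⁻¹ = z⁻¹ := by
    rcases lt_or_gt_of_ne hz0 with h | h
    · rw [Real.sign_of_neg h, abs_of_neg h, inv_neg]; ring
    · rw [Real.sign_of_pos h, abs_of_pos h]; ring
  have h6 : |z| ^ (-α) * |z| ^ (α - 1) = |z|⁻¹ := by
    rw [← Real.rpow_add hzp, show -α + (α - 1) = -1 by ring, Real.rpow_neg_one]
  unfold profile oddKer
  rw [if_pos hz, h3, h4, Real.mul_rpow hzp.le h1.le]
  linear_combination (-Real.sign z * (1 - z⁻¹) ^ (-α)) * h6 - (1 - z⁻¹) ^ (-α) * h5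

lemma abs_profile_le_of_two_lt {α z : ℝ} (hα : α ∈ Ioo (0 : ℝ) 1) (hz : 2 < |z|) :
    |profile α z| ≤ 2 * |z| ^ (-2 : ℝ) := by
  have hzp : 0 < |z| := by linarith
  rw [profile_of_one_lt_abs (by linarith), abs_mul]
  set v := z⁻¹ with hv
  have hvz : |v| = |z|⁻¹ := abs_inv z
  have hv2 : |v| < 1 / 2 := by
    rw [hvz, one_div]; exact inv_strictAnti₀ (by norm_num) hz
  have hp : 0 < 1 - v := by linarith [(abs_lt.1 hv2).2]
  have hz2 : |z| ^ (-2 : ℝ) = |v| * |v| := by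
    rw [hvz, Real.rpow_neg hzp.le, ← mul_inv]; norm_num [sq]
  have key : |1 - (1 - v) ^ (-α)| ≤ 2 * |v| := by
    have hi : (1 - v)⁻¹ ≤ 1 + 2 * |v| := by
      rw [inv_le_iff_one_le_mul₀ hp]
      rcases le_total 0 v with h | h
      · rw [abs_of_nonneg h] at hv2 ⊢; nlinarith
      · rw [abs_of_nonpos h] at hv2 ⊢; nlinarith
    have hi' : 1 - 2 * |v| ≤ (1 - v)⁻¹ := by
      rw [← one_div, le_div_iff₀ hp]
      rcases le_total 0 v with h | h
      · rw [abs_of_nonneg h] at hv2 ⊢; nlinarith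
      · rw [abs_of_nonpos h] at hv2 ⊢; nlinarith
    rw [← Real.rpow_neg_one] at hi hi'
    rcases le_total 0 v with h | h
    · have a1 : (1 : ℝ) ≤ (1 - v) ^ (-α) :=
        Real.one_le_rpow_of_pos_of_le_one_of_nonpos hp (by linarith) (by linarith [hα.1])
      have a2 : (1 - v) ^ (-α) ≤ (1 - v) ^ (-1 : ℝ) :=
        Real.rpow_le_rpow_of_exponent_ge hp (by linarith) (by linarith [hα.2])
      rw [abs_le]; constructor <;> linarith [abs_nonneg v]
    · have a1 : (1 - v) ^ (-α) ≤ 1 :=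
        Real.rpow_le_one_of_one_le_of_nonpos (by linarith) (by linarith [hα.1])
      have a2 : (1 - v) ^ (-1 : ℝ) ≤ (1 - v) ^ (-α) :=
        Real.rpow_le_rpow_of_exponent_le (by linarith) (by linarith [hα.2])
      rw [abs_le]; constructor <;> linarith [abs_nonneg v]
  rw [hz2]
  nlinarith [mul_le_mul_of_nonneg_left key (abs_nonneg v)]

lemma abs_profile_le {α z : ℝ} (hα : α ∈ Ioo (0 : ℝ) 1) :
    |profile α z| ≤ 2 * |z| ^ (α - 1) + 2 * |1 - z| ^ (-α) + 1 := by
  have hA := Real.rpow_nonneg (abs_nonneg (1 - z)) (-α)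
  have hB := Real.rpow_nonneg (abs_nonneg z) (α - 1)
  have half : ∀ b : ℝ, b ∈ Ioo (-1 : ℝ) 0 → ∀ w : ℝ, 1 / 2 ≤ w → w ^ b ≤ 2 := by
    intro b hb w hw
    calc w ^ b ≤ (1 / 2 : ℝ) ^ b :=
          Real.rpow_le_rpow_of_nonpos (by norm_num) hw hb.2.le
      _ ≤ (1 / 2 : ℝ) ^ (-1 : ℝ) :=
          Real.rpow_le_rpow_of_exponent_ge (by norm_num) (by norm_num) hb.1.le
      _ = 2 := by rw [Real.rpow_neg_one]; norm_num
  have h1 : |oddKer α (1 - z) * |z| ^ (α - 1)| ≤ 2 * |z| ^ (α - 1) + 2 * |1 - z| ^ (-α) := by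
    rw [abs_mul, abs_of_nonneg hB]
    refine (mul_le_mul_of_nonneg_right (abs_oddKer_le _ _) hB).trans ?_
    rcases le_total (1 / 2) |z| with h | h
    · have := half (α - 1) ⟨by linarith [hα.1], by linarith [hα.2]⟩ _ h
      nlinarith
    · have h' : 1 / 2 ≤ |1 - z| := by
        have := abs_sub_abs_le_abs_sub 1 z
        rw [abs_one] at this; linarith
      have := half (-α) ⟨by linarith [hα.2], by linarith [hα.1]⟩ _ h'
      nlinarith
  have h2 : |(if 1 < |z| then z⁻¹ else 0)| ≤ 1 := by
    split_ifs with h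
    · rw [abs_inv]; exact (inv_lt_one_of_one_lt₀ h).le
    · simp
  unfold profile
  exact (abs_add_le _ _).trans (add_le_add h1 h2)

lemma integrable_profile {α : ℝ} (hα : α ∈ Ioo (0 : ℝ) 1) : Integrable (profile α) := by
  have hm : AEStronglyMeasurable (profile α) := (measurable_profile α).aestronglyMeasurable
  have hin : IntegrableOn (profile α) (Icc (-2) 2) := by
    have l1 := (locallyIntegrable_abs_rpow (a := α - 1) (by linarith [hα.1])).integrableOn_isCompact
      (isCompact_Icc (a := (-2 : ℝ)) (b := 2))
    have l2 : IntegrableOn (fun z : ℝ => |1 - z| ^ (-α)) (Icc (-2) 2) := by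
      have := ((integrable_cutoff_abs_rpow (a := -α) (by linarith [hα.2]) 3).comp_sub_left 1).integrableOn
        (s := Icc (-2 : ℝ) 2)
      refine this.congr_fun (fun z hz => ?_) measurableSet_Icc
      have : |1 - z| ≤ 3 := abs_le.2 ⟨by linarith [hz.2], by linarith [hz.1]⟩
      simp [this]
    have l3 : IntegrableOn (fun _ : ℝ => (1 : ℝ)) (Icc (-2) 2) := by simp
    refine (((l1.const_mul 2).add (l2.const_mul 2)).add l3).mono' hm.restrict
      (Filter.Eventually.of_forall fun z => ?_)
    exact abs_profile_le hα
  have hout : IntegrableOn (profile α) (Icc (-2) 2)ᶜ := by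
    have hb : Integrable (fun z : ℝ => if 2 < |z| then |z| ^ (-2 : ℝ) else 0) := by
      have h := (integrable_fun_norm_addHaar (μ := (volume : Measure ℝ))
        (f := fun y : ℝ => if 2 < y then y ^ (-2 : ℝ) else 0)).2 ?_
      · simpa [Real.norm_eq_abs] using h
      · simp only [Module.finrank_self, Nat.sub_self, pow_zero, one_smul]
        have h1 := integrableOn_Ioi_rpow_of_lt (a := -2) (c := 2) (by norm_num) (by norm_num)
        rw [← integrable_indicator_iff measurableSet_Ioi] at h1
        refine (h1.congr (Filter.Eventually.of_forall fun x => ?_)).integrableOn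
        by_cases hx : 2 < x <;> simp [indicator, hx]
    refine ((hb.const_mul 2).integrableOn).mono' hm.restrict ?_
    refine (ae_restrict_iff' measurableSet_Icc.compl).2 (Filter.Eventually.of_forall fun z hz => ?_)
    have hz2 : 2 < |z| := by
      by_contra h
      exact hz (abs_le.1 (not_lt.1 h))
    simpa [hz2] using abs_profile_le_of_two_lt hα hz2
  have := hin.union hout
  rwa [union_compl_self, integrableOn_univ] at this

/-! ### Positivity of the constant -/

/-- The even part (doubled) of `profile α`, plus its transform under the inversion `x ↦ 1/x` of the
half-line; its integral over `(0,∞)` is `2 ∫ profile α`. -/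
noncomputable def foldedProfile (α x : ℝ) : ℝ :=
  (profile α x + profile α (-x)) + x ^ (-2 : ℝ) * (profile α x⁻¹ + profile α (-x⁻¹))

lemma foldedProfile_pos_of_lt_one {α x : ℝ} (hα : α ∈ Ioo (0 : ℝ) 1) (hx0 : 0 < x) (hx1 : x < 1) :
    0 < foldedProfile α x := by
  have hp : 0 < 1 - x := by linarith
  have hq : 0 < 1 + x := by linarith
  have hi : 1 < |x⁻¹| := by rw [abs_of_pos (inv_pos.2 hx0)]; exact (one_lt_inv₀ hx0).2 hx1
  have hi' : 1 < |(-x⁻¹)| := by rwa [abs_neg]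
  have e1 : profile α x = (1 - x) ^ (-α) * x ^ (α - 1) := by
    simp [profile, hx1.not_gt, oddKer, Real.sign_of_pos hp, abs_of_pos hp, abs_of_pos hx0]
  have e2 : profile α (-x) = (1 + x) ^ (-α) * x ^ (α - 1) := by
    simp [profile, hx1.not_gt, oddKer, Real.sign_of_pos hq, abs_of_pos hq, abs_of_pos hx0]
  have e3 : profile α x⁻¹ = x * (1 - (1 - x) ^ (-α)) := by
    rw [profile_of_one_lt_abs hi, inv_inv]
  have e4 : profile α (-x⁻¹) = -x * (1 - (1 + x) ^ (-α)) := by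
    rw [profile_of_one_lt_abs hi', inv_neg, inv_inv, sub_neg_eq_add]
  have hx2 : x ^ (-2 : ℝ) = (x * x)⁻¹ := by
    rw [Real.rpow_neg hx0.le]; norm_num [sq]
  have hxa : x ^ (α - 1) = x ^ α * x⁻¹ := by rw [Real.rpow_sub_one hx0.ne']; rfl
  set A := (1 - x) ^ (-α) with hA
  set B := (1 + x) ^ (-α) with hB
  have hApos : 0 < A := Real.rpow_pos_of_pos hp _
  have eq : foldedProfile α x = x⁻¹ * (x ^ α * (A + B) - (A - B)) := by
    unfold foldedProfile
    rw [e1, e2, e3, e4, hx2, hxa]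
    field_simp
    ring
  rw [eq]
  refine mul_pos (inv_pos.2 hx0) ?_
  -- With `s = (1-x)/(1+x)` one has `x + s + x s = 1`, and each of `x`, `s` lies strictly below its
  -- `α`-th power.
  set s := (1 - x) / (1 + x) with hs
  have hs0 : 0 < s := div_pos hp hq
  have hs1 : s < 1 := by rw [hs, div_lt_one hq]; linarith
  have hBA : B = A * s ^ α := by
    rw [hs, Real.div_rpow hp.le hq.le, hA, hB, Real.rpow_neg hp.le, Real.rpow_neg hq.le]
    have := (Real.rpow_pos_of_pos hp α).ne'
    field_simp
  have hxx : x < x ^ α := by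
    simpa using Real.rpow_lt_rpow_of_exponent_gt hx0 hx1 hα.2
  have hss : s < s ^ α := by
    simpa using Real.rpow_lt_rpow_of_exponent_gt hs0 hs1 hα.2
  have hsum : x + s + x * s = 1 := by rw [hs]; field_simp; ring
  have : 0 < x ^ α + s ^ α + x ^ α * s ^ α - 1 := by nlinarith
  rw [hBA]
  nlinarith [mul_pos hApos this]

lemma foldedProfile_inv {α x : ℝ} (hx : 0 < x) :
    foldedProfile α x = x ^ (-2 : ℝ) * foldedProfile α x⁻¹ := by
  have h : x ^ (-2 : ℝ) * x⁻¹ ^ (-2 : ℝ) = 1 := by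
    rw [Real.inv_rpow hx.le, mul_inv_cancel₀ (Real.rpow_pos_of_pos hx _).ne']
  unfold foldedProfile
  rw [inv_inv]
  linear_combination -(profile α x + profile α (-x)) * h

lemma foldedProfile_pos {α x : ℝ} (hα : α ∈ Ioo (0 : ℝ) 1) (hx0 : 0 < x) (hx1 : x ≠ 1) :
    0 < foldedProfile α x := by
  rcases lt_or_gt_of_ne hx1 with h | h
  · exact foldedProfile_pos_of_lt_one hα hx0 h
  · rw [foldedProfile_inv hx0]
    exact mul_pos (Real.rpow_pos_of_pos hx0 _)
      (foldedProfile_pos_of_lt_one hα (inv_pos.2 hx0) (inv_lt_one_of_one_lt₀ h))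

/-- The constant `∫ φ` (in fact `π cot(πα/2)`) is positive, because its integrand folded under
`x ↦ -x` and `x ↦ 1/x` is. -/
lemma integral_profile_pos {α : ℝ} (hα : α ∈ Ioo (0 : ℝ) 1) : 0 < ∫ z, profile α z := by
  have hint := integrable_profile hα
  set Φ : ℝ → ℝ := fun x => profile α x + profile α (-x) with hΦ
  have hΦi : IntegrableOn Φ (Ioi 0) := (hint.add hint.comp_neg).integrableOn
  have h1 : ∫ z, profile α z = ∫ x in Ioi (0 : ℝ), Φ x := by
    have hn : ∫ x in Ioi (0 : ℝ), profile α (-x) = ∫ x in Iic (0 : ℝ), profile α x := by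
      simp
    rw [hΦ, integral_add hint.integrableOn hint.comp_neg.integrableOn, hn, ← compl_Ioi,
      integral_add_compl measurableSet_Ioi hint]
  have hcongr : EqOn (fun x : ℝ => (|(-1 : ℝ)| * x ^ (-1 - 1 : ℝ)) • Φ (x ^ (-1 : ℝ)))
      (fun x => x ^ (-2 : ℝ) * Φ x⁻¹) (Ioi 0) := by
    intro x _
    simp only [abs_neg, abs_one, one_mul, smul_eq_mul, Real.rpow_neg_one]
    norm_num
  have h2 : ∫ x in Ioi (0 : ℝ), x ^ (-2 : ℝ) * Φ x⁻¹ = ∫ x in Ioi (0 : ℝ), Φ x := by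
    rw [← integral_comp_rpow_Ioi Φ (p := -1) (by norm_num)]
    exact (setIntegral_congr_fun measurableSet_Ioi hcongr).symm
  have h2i : IntegrableOn (fun x : ℝ => x ^ (-2 : ℝ) * Φ x⁻¹) (Ioi 0) :=
    ((integrableOn_Ioi_comp_rpow_iff Φ (p := -1) (by norm_num)).2 hΦi).congr_fun hcongr
      measurableSet_Ioi
  have h3 : ∫ x in Ioi (0 : ℝ), foldedProfile α x = 2 * ∫ z, profile α z := by
    have : ∫ x in Ioi (0 : ℝ), foldedProfile α x
        = ∫ x in Ioi (0 : ℝ), (Φ x + x ^ (-2 : ℝ) * Φ x⁻¹) := rfl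
    rw [this, integral_add hΦi h2i, h2, ← h1]; ring
  have hfi : IntegrableOn (foldedProfile α) (Ioi 0) := hΦi.add h2i
  have hne : ∀ᵐ x : ℝ, x ≠ 1 := by simp [ae_iff]
  have h4 : 0 < ∫ x in Ioi (0 : ℝ), foldedProfile α x := by
    rw [setIntegral_pos_iff_support_of_nonneg_ae ?_ hfi]
    · refine lt_of_lt_of_le ?_ (measure_mono (s := Ioo (0 : ℝ) 1) fun x hx =>
        ⟨(foldedProfile_pos hα hx.1 hx.2.ne).ne', hx.1⟩)
      simp
    · refine (ae_restrict_iff' measurableSet_Ioi).2 ?_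
      filter_upwards [hne] with x hx hx0
      exact (foldedProfile_pos hα hx0 hx).le
  linarith

/-! ### The Fubini argument -/

/-- Homogeneity of the product kernel. -/
lemma kernel_eq {α x y : ℝ} (hy : y ≠ 0) :
    oddKer α (y - x) * |x| ^ (α - 1)
      = y⁻¹ * profile α (x / y) - (if |y| < |x| then x⁻¹ else 0) := by
  have hyp : 0 < |y| := abs_pos.2 hy
  have hc : (1 < |x / y|) = (|y| < |x|) := by rw [abs_div, one_lt_div hyp]
  have h1 : y - x = y * (1 - x / y) := by field_simp
  have h2 : |x| = |y| * |x / y| := by rw [← abs_mul]; congr 1; field_simp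
  have h3 : |y| ^ (-α) * |y| ^ (α - 1) = |y|⁻¹ := by
    rw [← Real.rpow_add hyp, show -α + (α - 1) = -1 by ring, Real.rpow_neg_one]
  have h4 : Real.sign y * |y|⁻¹ = y⁻¹ := by
    rcases lt_or_gt_of_ne hy with h | h
    · rw [Real.sign_of_neg h, abs_of_neg h, inv_neg]; ring
    · rw [Real.sign_of_pos h, abs_of_pos h]; ring
  have h5 : oddKer α (y - x) * |x| ^ (α - 1)
      = y⁻¹ * (oddKer α (1 - x / y) * |x / y| ^ (α - 1)) := by
    rw [h1]
    conv_lhs => rw [h2]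
    unfold oddKer
    rw [sign_mul_real, abs_mul, Real.mul_rpow hyp.le (abs_nonneg _),
      Real.mul_rpow hyp.le (abs_nonneg _), ← h4]
    linear_combination (Real.sign y * Real.sign (1 - x / y) * |1 - x / y| ^ (-α)
      * |x / y| ^ (α - 1)) * h3
  rw [h5]
  unfold profile
  simp only [hc]
  split_ifs with h
  · field_simp
    ring
  · ring

/-- The scaled profile has the same `L¹` norm at every `y ≠ 0`, so it is integrable against any
integrable function of `y`. -/
lemma integrable_scaled_profile {α : ℝ} (hα : α ∈ Ioo (0 : ℝ) 1) {f : ℝ → ℂ}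
    (hf : Integrable f) :
    Integrable (fun p : ℝ × ℝ => f p.2 * ((p.2⁻¹ * profile α (p.1 / p.2) : ℝ) : ℂ))
      (volume.prod volume) := by
  have hm : AEStronglyMeasurable
      (fun p : ℝ × ℝ => f p.2 * ((p.2⁻¹ * profile α (p.1 / p.2) : ℝ) : ℂ))
      (volume.prod volume) := by
    refine hf.aestronglyMeasurable.comp_snd.mul ?_
    refine (Complex.measurable_ofReal.comp ?_).aestronglyMeasurable
    exact measurable_snd.inv.mul ((measurable_profile α).comp (measurable_fst.div measurable_snd))
  have hne : ∀ᵐ y : ℝ, y ≠ 0 := by simp [ae_iff]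
  refine (integrable_prod_iff' hm).2 ⟨?_, ?_⟩
  · filter_upwards [hne] with y hy
    exact ((((integrable_profile hα).comp_div hy).const_mul y⁻¹).ofReal).const_mul (f y)
  · refine (hf.norm.mul_const (∫ z, ‖profile α z‖)).congr ?_
    filter_upwards [hne] with y hy
    have : ∀ x : ℝ, ‖f y * ((y⁻¹ * profile α (x / y) : ℝ) : ℂ)‖
        = (‖f y‖ * |y|⁻¹) * ‖profile α (x / y)‖ := by
      intro x
      rw [norm_mul, Complex.norm_real, norm_mul, Real.norm_eq_abs y⁻¹, abs_inv, mul_assoc]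
    simp_rw [this]
    rw [integral_const_mul, Measure.integral_comp_div (fun z => ‖profile α z‖), smul_eq_mul]
    have := abs_pos.2 hy
    field_simp

lemma integral_scaled_profile {α y : ℝ} (hy : y ≠ 0) :
    ∫ x, y⁻¹ * profile α (x / y) = Real.sign y * ∫ z, profile α z := by
  rw [integral_const_mul, Measure.integral_comp_div (profile α), smul_eq_mul, ← mul_assoc]
  congr 1
  rcases lt_or_gt_of_ne hy with h | h
  · rw [Real.sign_of_neg h, abs_of_neg h]; field_simp
  · rw [Real.sign_of_pos h, abs_of_pos h]; field_simp

/-- The truncated odd kernel `x⁻¹` on `|y| < |x| ≤ R`. -/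
noncomputable def annKer (R x y : ℝ) : ℝ := if |y| < |x| ∧ |x| ≤ R then x⁻¹ else 0

lemma measurable_annKer (R : ℝ) : Measurable (fun p : ℝ × ℝ => annKer R p.1 p.2) := by
  unfold annKer
  refine Measurable.ite ?_ measurable_fst.inv measurable_const
  exact (measurableSet_lt measurable_snd.abs measurable_fst.abs).inter
    (measurableSet_le measurable_fst.abs measurable_const)

lemma abs_annKer_le {R x y : ℝ} (hy : y ≠ 0) :
    |annKer R x y| ≤ (if |x| ≤ R then |x| ^ (-(1 / 2) : ℝ) else 0) *
      (if |y| ≤ R then |y| ^ (-(1 / 2) : ℝ) else 0) := by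
  have hn : 0 ≤ (if |x| ≤ R then |x| ^ (-(1 / 2) : ℝ) else 0) *
      (if |y| ≤ R then |y| ^ (-(1 / 2) : ℝ) else 0) := by
    refine mul_nonneg ?_ ?_ <;> split_ifs <;>
      first | exact Real.rpow_nonneg (abs_nonneg _) _ | exact le_rfl
  by_cases h : |y| < |x| ∧ |x| ≤ R
  · have hyp : 0 < |y| := abs_pos.2 hy
    have hxp : 0 < |x| := hyp.trans h.1
    have e : |x|⁻¹ = |x| ^ (-(1 / 2) : ℝ) * |x| ^ (-(1 / 2) : ℝ) := by
      rw [← Real.rpow_add hxp, ← Real.rpow_neg_one]; norm_num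
    rw [annKer, if_pos h, if_pos h.2, if_pos (h.1.le.trans h.2), abs_inv, e]
    exact mul_le_mul_of_nonneg_left
      (Real.rpow_le_rpow_of_nonpos hyp h.1.le (by norm_num)) (Real.rpow_nonneg hxp.le _)
  · rw [annKer, if_neg h, abs_zero]; exact hn

lemma integrable_annKer {R : ℝ} {f : ℝ → ℂ} (hf : Continuous f) {M : ℝ} (hM : ∀ y, ‖f y‖ ≤ M) :
    Integrable (fun p : ℝ × ℝ => f p.2 * ((annKer R p.1 p.2 : ℝ) : ℂ)) (volume.prod volume) := by
  have hq := integrable_cutoff_abs_rpow (a := -(1 / 2)) (by norm_num) R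
  have hne : ∀ᵐ p : ℝ × ℝ ∂(volume.prod volume), p.2 ≠ 0 := by
    have h0 : ∀ᵐ y : ℝ, y ≠ 0 := by simp [ae_iff]
    exact Measure.quasiMeasurePreserving_snd.ae h0
  refine ((hq.mul_prod hq).const_mul M).mono' ?_ ?_
  · exact ((hf.measurable.comp measurable_snd).mul
      (Complex.measurable_ofReal.comp (measurable_annKer R))).aestronglyMeasurable
  · filter_upwards [hne] with p hp
    rw [norm_mul, Complex.norm_real, Real.norm_eq_abs]
    exact mul_le_mul (hM _) (abs_annKer_le hp) (abs_nonneg _) ((norm_nonneg _).trans (hM 0))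

lemma integral_annKer (R y : ℝ) : ∫ x, annKer R x y = 0 := by
  have h : ∫ x, annKer R (-x) y = ∫ x, annKer R x y := integral_neg_eq_self (annKer R · y) volume
  have h' : ∀ x, annKer R (-x) y = -annKer R x y := by
    intro x
    unfold annKer
    rw [abs_neg]
    split_ifs
    · rw [inv_neg]
    · simp
  simp_rw [h', integral_neg] at h
  linarith

/-- The identity at the origin, for a test function `h`. -/
lemma core {α : ℝ} (hα : α ∈ Ioo (0 : ℝ) 1) {h : ℝ → ℂ} (hh : ContDiff ℝ 1 h)
    (hc : HasCompactSupport h) :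
    Integrable (fun x : ℝ =>
      (∫ y, deriv h y * ((oddKer α (y - x) : ℝ) : ℂ)) * ((|x| ^ (α - 1) : ℝ) : ℂ)) ∧
    ∫ x : ℝ, (∫ y, deriv h y * ((oddKer α (y - x) : ℝ) : ℂ)) * ((|x| ^ (α - 1) : ℝ) : ℂ)
      = -2 * ((∫ z, profile α z : ℝ) : ℂ) * h 0 := by
  have hd : Continuous (deriv h) := hh.continuous_deriv le_rfl
  have hdc : HasCompactSupport (deriv h) := hc.deriv
  have hdi : Integrable (deriv h) := hd.integrable_of_hasCompactSupport hdc
  obtain ⟨M, hM⟩ := hdc.exists_bound_of_continuous hd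
  obtain ⟨R, hR⟩ := hdc.isCompact.isBounded.exists_norm_le
  have hsupp : ∀ y, R < |y| → deriv h y = 0 := by
    intro y hy
    by_contra hne
    exact absurd (hR y (subset_tsupport _ hne)) (not_le.2 hy)
  have hIic := hc.integral_Iic_deriv_eq hh 0
  have hIoi := hc.integral_Ioi_deriv_eq hh 0
  have hzero : ∫ y, deriv h y = 0 := by
    rw [← integral_add_compl measurableSet_Ioi hdi, compl_Ioi, hIic, hIoi]; ring
  have hne : ∀ᵐ y : ℝ, y ≠ 0 := by simp [ae_iff]
  have i1 := integrable_scaled_profile hα hdi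
  have i2 := integrable_annKer (R := R) hd hM
  set F : ℝ × ℝ → ℂ := fun p => deriv h p.2 * ((p.2⁻¹ * profile α (p.1 / p.2) : ℝ) : ℂ)
    - deriv h p.2 * ((annKer R p.1 p.2 : ℝ) : ℂ) with hF
  have iF : Integrable F (volume.prod volume) := i1.sub i2
  have hslice : (fun x : ℝ =>
      (∫ y, deriv h y * ((oddKer α (y - x) : ℝ) : ℂ)) * ((|x| ^ (α - 1) : ℝ) : ℂ))
      =ᵐ[volume] fun x => ∫ y, F (x, y) := by
    filter_upwards [iF.prod_right_ae] with x hx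
    set e : ℝ := if R < |x| then x⁻¹ else 0 with he
    -- The multiple `e` of `∫ h' = 0` supplies the part of the odd kernel with `|x| > R`.
    have hpt : ∀ᵐ y : ℝ, deriv h y * ((oddKer α (y - x) : ℝ) : ℂ) * ((|x| ^ (α - 1) : ℝ) : ℂ)
        = F (x, y) - deriv h y * (e : ℂ) := by
      filter_upwards [hne] with y hy
      by_cases hyR : R < |y|
      · simp [hF, hsupp y hyR]
      · have hk : oddKer α (y - x) * |x| ^ (α - 1)
            = y⁻¹ * profile α (x / y) - annKer R x y - e := by
          rw [kernel_eq hy, sub_sub]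
          congr 1
          rw [annKer, he]
          rw [not_lt] at hyR
          by_cases hxR : R < |x|
          · simp [hxR, hyR.trans_lt hxR]
          · simp [hxR, not_lt.1 hxR]
        rw [mul_assoc, ← Complex.ofReal_mul, hk, hF]
        push_cast
        ring
    rw [← integral_mul_const, integral_congr_ae hpt, integral_sub hx (hdi.mul_const _),
      integral_mul_const, hzero, zero_mul, sub_zero]
  refine ⟨iF.integral_prod_left.congr hslice.symm, ?_⟩
  rw [integral_congr_ae hslice,
    integral_integral_swap (f := fun x y => F (x, y)) iF]
  set C : ℝ := ∫ z, profile α z with hC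
  have hin : (fun y => ∫ x, F (x, y)) =ᵐ[volume]
      fun y => deriv h y * ((Real.sign y : ℝ) : ℂ) * (C : ℂ) := by
    filter_upwards [hne, i1.prod_left_ae, i2.prod_left_ae] with y hy h1 h2
    rw [hF]
    simp only
    rw [integral_sub h1 h2, integral_const_mul, integral_const_mul, integral_complex_ofReal,
      integral_complex_ofReal, integral_annKer, integral_scaled_profile hy]
    push_cast
    ring
  rw [integral_congr_ae hin, integral_mul_const]
  have hsi : Integrable fun y => deriv h y * ((Real.sign y : ℝ) : ℂ) := by
    refine hdi.mono ?_ (Filter.Eventually.of_forall fun y => ?_)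
    · exact (hd.measurable.mul
        (Complex.measurable_ofReal.comp measurable_sign_real)).aestronglyMeasurable
    · rw [norm_mul, Complex.norm_real]
      exact mul_le_of_le_one_right (norm_nonneg _) (abs_sign_le y)
  have hs : ∫ y, deriv h y * ((Real.sign y : ℝ) : ℂ) = -2 * h 0 := by
    rw [← integral_add_compl measurableSet_Ioi hsi, compl_Ioi]
    have a1 : ∫ y in Ioi (0 : ℝ), deriv h y * ((Real.sign y : ℝ) : ℂ) = -h 0 := by
      rw [← hIoi]
      refine setIntegral_congr_fun measurableSet_Ioi fun y hy => ?_
      simp [Real.sign_of_pos hy]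
    have a2 : ∫ y in Iic (0 : ℝ), deriv h y * ((Real.sign y : ℝ) : ℂ) = -h 0 := by
      rw [← hIic, integral_Iic_eq_integral_Iio, integral_Iic_eq_integral_Iio, ← integral_neg]
      refine setIntegral_congr_fun measurableSet_Iio fun y hy => ?_
      simp [Real.sign_of_neg hy]
    rw [a1, a2]; ring
  rw [hs]; ring

/-- `Valpha α g` is the convolution of `g` with a locally integrable kernel, so the derivative
falls on `g`. -/
lemma Walpha_eq {α : ℝ} (hα : α ∈ Ioo (0 : ℝ) 1) {g : ℝ → ℂ} (hg : ContDiff ℝ 1 g)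
    (hc : HasCompactSupport g) (t : ℝ) :
    Walpha α g t = (α⁻¹ : ℝ) • ∫ y, deriv g y * ((oddKer α (y - t) : ℝ) : ℂ) := by
  set k : ℝ → ℂ := fun u => ((oddKer α (-u) : ℝ) : ℂ) with hk
  have hkl : LocallyIntegrable k := by
    refine (locallyIntegrable_abs_rpow (a := -α) (by linarith [hα.2])).mono ?_
      (Filter.Eventually.of_forall fun u => ?_)
    · exact (Complex.measurable_ofReal.comp
        ((measurable_oddKer α).comp measurable_neg)).aestronglyMeasurable
    · rw [hk, Complex.norm_real, Real.norm_eq_abs, Real.norm_eq_abs, oddKer_neg, abs_neg,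
        abs_of_nonneg (Real.rpow_nonneg (abs_nonneg u) _)]
      exact abs_oddKer_le α u
  have hconv : ∀ f : ℝ → ℂ, ∀ s, convolution f k (ContinuousLinearMap.mul ℝ ℂ) volume s
      = ∫ y, f y * ((oddKer α (y - s) : ℝ) : ℂ) := by
    intro f s
    simp [convolution, hk]
  have hV : Valpha α g
      = fun s => (α⁻¹ : ℝ) • convolution g k (ContinuousLinearMap.mul ℝ ℂ) volume s := by
    funext s
    rw [hconv]
    rfl
  unfold Walpha
  have hderiv := (hc.hasDerivAt_convolution_left (ContinuousLinearMap.mul ℝ ℂ) hg hkl t).fun_const_smul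
    (α⁻¹ : ℝ)
  rw [hV, hderiv.deriv, hconv]

/-! ### The theorem -/

/-- For every α ∈ (0,1) there is a nonzero real constant c (depending
only on α) such that for every g ∈ C_c^∞(ℝ,ℂ) and every t the integral
∫ (W_α g)(x)·|t−x|^{α−1} dx converges absolutely and equals c·g(t). -/
theorem statement5 (α : ℝ) (hα : α ∈ Set.Ioo (0 : ℝ) 1) :
    ∃ c : ℝ, c ≠ 0 ∧
      ∀ g : ℝ → ℂ, ContDiff ℝ (⊤ : ℕ∞) g → HasCompactSupport g →
        ∀ t : ℝ,
          Integrable (fun x : ℝ => Walpha α g x * ((|t - x| ^ (α - 1) : ℝ) : ℂ)) ∧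
          ∫ x : ℝ, Walpha α g x * ((|t - x| ^ (α - 1) : ℝ) : ℂ) = (c : ℂ) * g t := by
  refine ⟨α⁻¹ * (-2 * ∫ z, profile α z), ?_, ?_⟩
  · exact mul_ne_zero (inv_ne_zero hα.1.ne')
      (mul_ne_zero (by norm_num) (integral_profile_pos hα).ne')
  intro g hg hc t
  have hg1 : ContDiff ℝ 1 g := hg.of_le (by exact_mod_cast le_top)
  set h : ℝ → ℂ := fun y => g (y + t) with hh
  have hh1 : ContDiff ℝ 1 h := hg1.comp (contDiff_id.add contDiff_const)
  have hhc : HasCompactSupport h := hc.comp_homeomorph (Homeomorph.addRight t)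
  have hdh : ∀ y, deriv h y = deriv g (y + t) := fun y => deriv_comp_add_const g t y
  obtain ⟨c1, c2⟩ := core hα hh1 hhc
  set G : ℝ → ℂ := fun x => Walpha α g x * ((|t - x| ^ (α - 1) : ℝ) : ℂ) with hG
  have hshift : ∀ x, G (x + t) = ((α⁻¹ : ℝ) : ℂ) *
      ((∫ y, deriv h y * ((oddKer α (y - x) : ℝ) : ℂ)) * ((|x| ^ (α - 1) : ℝ) : ℂ)) := by
    intro x
    have e : ∫ y, deriv g y * ((oddKer α (y - (x + t)) : ℝ) : ℂ)
        = ∫ y, deriv h y * ((oddKer α (y - x) : ℝ) : ℂ) := by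
      rw [← integral_add_right_eq_self _ t]
      refine integral_congr_ae (Filter.Eventually.of_forall fun y => ?_)
      simp only [hdh, add_sub_add_right_eq_sub]
    have e2 : |t - (x + t)| = |x| := by rw [sub_add_cancel_right, abs_neg]
    simp only [hG]
    rw [Walpha_eq hα hg1 hc, e, e2, Complex.real_smul, mul_assoc]
  have hGi : Integrable (fun x => G (x + t)) := by
    simp_rw [hshift]
    exact c1.const_mul _
  refine ⟨by simpa using hGi.comp_sub_right t, ?_⟩
  rw [← integral_add_right_eq_self G t]
  simp_rw [hshift]
  rw [integral_const_mul, c2]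
  simp only [hh, zero_add]
  push_cast
  ring
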